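/- Let G be a connected weighted graph on a finite vertex set V with positive edge susceptances and weighted Laplacian L. Let C ⊆ V be a vertex cut set, let B be a nonempty union of the vertex sets of some (but not all) connected components of G − C, and let A = V ∖ (B ∪ C), so that no edge of G joins A and B. Suppose θ : V → ℝ satisfies: (L θ)_v = 0 for every v ∈ A (zero net power injection at every interior bus of the i-th sub-graph), and θ is constant on C (equal voltage angles at all cut-set buses). Then θ is constant on A ∪ C; in particular, the power flow b_e (θ_u − θ_v) on every edge e = {u,v} with both endpoints in A ∪ C is zero. -/

import Mathlib

open Matrix

/-- The weighted Laplacian of a graph on the finite vertex set `V` whose edges are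
the pairs `{u,v}` with `w u v > 0`, carrying susceptance `w u v`. -/
def weightedLaplacian {V : Type*} [Fintype V] [DecidableEq V] (w : V → V → ℝ) :
    Matrix V V ℝ :=
  Matrix.of fun u v => if u = v then ∑ x, w u x else -(w u v)

theorem weightedLaplacian_mulVec_apply {V : Type*} [Fintype V] [DecidableEq V]
    (w : V → V → ℝ) (hdiag : ∀ v, w v v = 0) (θ : V → ℝ) (v : V) :
    (weightedLaplacian w *ᵥ θ) v = ∑ x, w v x * (θ v - θ x) := by
  have h : ∀ x, weightedLaplacian w v x * θ x =
      (if v = x then (∑ y, w v y) * θ v else 0) - w v x * θ x := by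
    intro x
    by_cases hx : v = x
    · subst hx
      simp [weightedLaplacian, hdiag]
    · simp [weightedLaplacian, hx]
  simp only [Matrix.mulVec, dotProduct, h, mul_sub, Finset.sum_sub_distrib,
    Finset.sum_ite_eq, Finset.mem_univ, if_true, Finset.sum_mul]

theorem SimpleGraph.Connected.mem_of_adj_closed {V : Type*} {G : SimpleGraph V}
    (hG : G.Connected) {S : Set V} (hS : ∀ u ∈ S, ∀ v, G.Adj u v → v ∈ S)
    {a : V} (ha : a ∈ S) (b : V) : b ∈ S := by
  obtain ⟨p⟩ := hG.preconnected a b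
  induction p with
  | nil => exact ha
  | cons h _ ih => exact ih (hS _ ha _ h)

/-- Discrete maximum principle: if all neighbours of `A` lie in `A ∪ C`, a function harmonic on
`A` attains its maximum over `A ∪ C` on `C`. -/
theorem exists_boundary_max_of_harmonic {V : Type*} [Fintype V] [DecidableEq V]
    (w : V → V → ℝ)
    (hsym : ∀ u v, w u v = w v u)
    (hdiag : ∀ v, w v v = 0)
    (hnonneg : ∀ u v, 0 ≤ w u v)
    (hconn : (SimpleGraph.fromRel fun u v => 0 < w u v).Connected)
    (A C : Finset V) (hAne : A.Nonempty) (hAuniv : ∃ b, b ∉ A)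
    (hsep : ∀ a ∈ A, ∀ b, b ∉ A ∪ C → w a b = 0)
    (θ : V → ℝ)
    (hharm : ∀ v ∈ A, (weightedLaplacian w *ᵥ θ) v = 0) :
    ∃ u ∈ C, ∀ v ∈ A ∪ C, θ v ≤ θ u := by
  obtain ⟨m, hm, hmax⟩ := (A ∪ C).exists_max_image θ (hAne.mono Finset.subset_union_left)
  by_contra! hC
  have hlt : ∀ u ∈ C, θ u ≠ θ m := by
    intro u hu h
    obtain ⟨v, hv, hlt⟩ := hC u hu
    exact absurd (hmax v hv) (by rw [← h]; exact not_le.mpr hlt)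
  have hmS : m ∈ {v | v ∈ A ∧ θ v = θ m} :=
    ⟨(Finset.mem_union.mp hm).resolve_right fun h => hlt m h rfl, rfl⟩
  obtain ⟨b, hb⟩ := hAuniv
  refine hb (hconn.mem_of_adj_closed ?_ hmS b).1
  rintro u ⟨huA, hu⟩ v huv
  have hw : 0 < w u v := by
    rcases (SimpleGraph.fromRel_adj _ _ _).mp huv with ⟨-, h | h⟩
    · exact h
    · rwa [hsym]
  have hvAC : v ∈ A ∪ C := by
    by_contra h
    exact hw.ne' (hsep u huA v h)
  have hsum := hharm u huA
  rw [weightedLaplacian_mulVec_apply w hdiag,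
    Finset.sum_eq_zero_iff_of_nonneg] at hsum
  · have hv : θ v = θ m := by
      have := (mul_eq_zero.mp (hsum v (Finset.mem_univ v))).resolve_left hw.ne'
      linarith
    exact ⟨(Finset.mem_union.mp hvAC).resolve_right fun h => hlt v h hv, hv⟩
  · intro x _
    by_cases hx : x ∈ A ∪ C
    · exact mul_nonneg (hnonneg u x) (by linarith [hmax x hx])
    · simp [hsep u huA x hx]

/-- Core claim of Proposition 2.  Decompose the connected grid by a vertex cut set
`C`: `B` is a nonempty union of some (but not all) of the connected components of
`G − C`, `A = V ∖ (B ∪ C)` is nonempty, and no edge joins `A` and `B`.  If the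
angles `θ` satisfy `(L θ)_v = 0` for every interior bus `v ∈ A` and `θ` is constant
on `C`, then `θ` is constant on `A ∪ C`; in particular the flow on every edge with
both endpoints in `A ∪ C` is zero. -/
theorem zero_flow_in_subgrid {V : Type*} [Fintype V] [DecidableEq V]
    (w : V → V → ℝ)
    (hsym : ∀ u v, w u v = w v u)
    (hdiag : ∀ v, w v v = 0)
    (hnonneg : ∀ u v, 0 ≤ w u v)
    (hconn : (SimpleGraph.fromRel fun u v => 0 < w u v).Connected)
    (C B : Finset V) (hCB : Disjoint C B) (hB : B.Nonempty)
    (A : Finset V) (hA : A = (C ∪ B)ᶜ) (hAne : A.Nonempty)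
    (hsep : ∀ a ∈ A, ∀ b ∈ B, w a b = 0)
    (θ : V → ℝ)
    (hharm : ∀ v ∈ A, (weightedLaplacian w *ᵥ θ) v = 0)
    (hconst : ∀ u ∈ C, ∀ v ∈ C, θ u = θ v) :
    (∀ u ∈ A ∪ C, ∀ v ∈ A ∪ C, θ u = θ v) ∧
    (∀ u ∈ A ∪ C, ∀ v ∈ A ∪ C, 0 < w u v → w u v * (θ u - θ v) = 0) := by
  have hsep' : ∀ a ∈ A, ∀ b, b ∉ A ∪ C → w a b = 0 := by
    intro a ha b hb
    refine hsep a ha b ?_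
    simp only [hA, Finset.mem_union, Finset.mem_compl] at hb
    tauto
  have hAuniv : ∃ b, b ∉ A := by
    obtain ⟨b, hb⟩ := hB
    exact ⟨b, by simp [hA, hb]⟩
  obtain ⟨p, hpC, hp⟩ := exists_boundary_max_of_harmonic w hsym hdiag hnonneg hconn A C
    hAne hAuniv hsep' θ hharm
  obtain ⟨q, hqC, hq⟩ := exists_boundary_max_of_harmonic w hsym hdiag hnonneg hconn A C
    hAne hAuniv hsep' (-θ) fun v hv => by
      rw [Matrix.mulVec_neg, Pi.neg_apply, hharm v hv, neg_zero]
  have hpq := hconst p hpC q hqC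
  have hθ : ∀ u ∈ A ∪ C, θ u = θ p := by
    intro u hu
    have := hq u hu
    simp only [Pi.neg_apply, neg_le_neg_iff] at this
    exact le_antisymm (hp u hu) (hpq ▸ this)
  have hall : ∀ u ∈ A ∪ C, ∀ v ∈ A ∪ C, θ u = θ v := fun u hu v hv =>
    (hθ u hu).trans (hθ v hv).symm
  exact ⟨hall, fun u hu v hv _ => by rw [hall u hu v hv, sub_self, mul_zero]⟩
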